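/- Let q ∈ ℂ with 0 < |q| < 1, let p be a positive integer, and let y ∈ ℂ with y ≠ 0. Assume the family (i,j) ↦ τ_p(j-i) τ(i-j) y^{i-j} q^{(i-1)j} / ((q;q)_i (q;q)_j) indexed by ℕ×ℕ is absolutely summable. Then ∑_{i,j≥0} τ_p(j-i) τ(i-j) y^{i-j} q^{(i-1)j} / ((q;q)_i (q;q)_j) = [(-1/y; q^{p+1})_∞ (-q^{p+1} y; q^{p+1})_∞ (q^{p+1}; q^{p+1})_∞ + (-q/y; q^{p+1})_∞ (-q^p y; q^{p+1})_∞ (q^{p+1}; q^{p+1})_∞] / (q;q)_∞. -/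

import Mathlib

/-- The finite q-shifted factorial with base `Q`: `(a;Q)_n = ∏_{k=0}^{n-1} (1 - a Q^k)`. -/
noncomputable def qPoch (a q : ℂ) (n : ℕ) : ℂ := ∏ k ∈ Finset.range n, (1 - a * q ^ k)

/-- The infinite q-shifted factorial `(a;Q)_∞ = ∏_{k=0}^{∞} (1 - a Q^k)`. -/
noncomputable def qPochInf (a q : ℂ) : ℂ := ∏' k : ℕ, (1 - a * q ^ k)

/-- `τ(n) = (-1)^n q^{n(n-1)/2}` for `n : ℤ`. -/
noncomputable def qTauZ (q : ℂ) (n : ℤ) : ℂ := (-1 : ℂ) ^ n * q ^ ((n * (n - 1)) / 2).toNat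

/-- `τ_p(n) = (-1)^n q^{p·n(n-1)/2}` for `n : ℤ`. -/
noncomputable def qTauP (q : ℂ) (p : ℕ) (n : ℤ) : ℂ :=
  (-1 : ℂ) ^ n * q ^ (p * ((n * (n - 1)) / 2).toNat)

/-!
Writing `W i j = q ^ (i * j) / ((q;q)_i (q;q)_j)`, the summand is `c (i - j) * W i j / q ^ j` with
`c n = Q ^ (n * (n - 1) / 2) * z ^ n`, `Q = q ^ (p + 1)` and `z = q ^ p * y`, so the double series
can be summed along the diagonals `i - j = n`.

The diagonal sums `A n = ∑ k, W k (k + n)` all equal `1 / (q;q)_∞`: with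
`C n = ∑ k, q ^ k * W k (k + n)`, the recurrences of `W` in its two indices give
`A n = C n + q ^ (n + 1) * C (n + 1) = A (n + 1)`, and `A n → 1 / (q;q)_∞`. The same recurrence
shows that dividing by `q ^ j` multiplies the `n`-th diagonal sum by `1 + q ^ n`.

Hence the double series is `∑ n, c n * (1 + q ^ n) / (q;q)_∞`, two bilateral theta series that
Jacobi's triple product evaluates. The triple product itself follows by summing the product of
Euler's expansions of `(-z;q)_∞` and `(-q/z;q)_∞` along the same diagonals.
-/

open Filter Topology

section Summation

theorem tendsto_tsum_of_dominated_of_tendsto_zero {α β E : Type*} [NormedAddCommGroup E]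
    [CompleteSpace E] {l : Filter α} {f : α → β → E} {b₀ : β} {L : E} {bound : β → ℝ}
    (hbound : Summable bound) (hb₀ : Tendsto (f · b₀) l (𝓝 L))
    (hne : ∀ b ≠ b₀, Tendsto (f · b) l (𝓝 0)) (hle : ∀ a b, ‖f a b‖ ≤ bound b) :
    Tendsto (fun a ↦ ∑' b, f a b) l (𝓝 L) := by
  classical
  rw [← tsum_pi_single b₀ L]
  refine tendsto_tsum_of_dominated_convergence hbound (fun b ↦ ?_) (.of_forall hle)
  rcases eq_or_ne b b₀ with rfl | hb
  · simpa only [Pi.single_eq_same] using hb₀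
  · simpa only [Pi.single_eq_of_ne hb] using hne b hb

/-- The parametrization of `ℕ × ℕ` by diagonals: `(n, k)` corresponds to the pair `(i, j)` with
`i - j = n` and `min i j = k`. It turns a double series into a series of diagonal sums. -/
def diagonalEquiv : ℤ × ℕ ≃ ℕ × ℕ where
  toFun x := (x.2 + x.1.toNat, x.2 + (-x.1).toNat)
  invFun x := ((x.1 : ℤ) - x.2, min x.1 x.2)
  left_inv := by
    rintro ⟨n, k⟩
    ext <;> simp only <;> omega
  right_inv := by
    rintro ⟨i, j⟩
    ext <;> simp only <;> omega

theorem diagonalEquiv_natCast (m k : ℕ) : diagonalEquiv (m, k) = (k + m, k) := by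
  simp [diagonalEquiv]

theorem diagonalEquiv_neg_natCast (m k : ℕ) : diagonalEquiv (-m, k) = (k, k + m) := by
  simp [diagonalEquiv]

theorem diagonalEquiv_fst_sub_snd (x : ℤ × ℕ) :
    ((diagonalEquiv x).1 : ℤ) - (diagonalEquiv x).2 = x.1 := by
  simp only [diagonalEquiv, Equiv.coe_fn_mk]
  omega

theorem hasSum_int_of_hasSum_diagonals {R : Type*} [NonUnitalNonAssocSemiring R]
    [TopologicalSpace R] [IsTopologicalSemiring R] [RegularSpace R] {f : ℕ × ℕ → R}
    {c g : ℤ → R} {s : R} (hs : HasSum (fun x : ℕ × ℕ ↦ c ((x.1 : ℤ) - x.2) * f x) s)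
    (hpos : ∀ m : ℕ, HasSum (fun k ↦ f (k + m, k)) (g m))
    (hneg : ∀ m : ℕ, HasSum (fun k ↦ f (k, k + m)) (g (-m))) :
    HasSum (fun n ↦ c n * g n) s := by
  have hdiag (n : ℤ) : HasSum (fun k ↦ f (diagonalEquiv (n, k))) (g n) := by
    obtain ⟨m, rfl | rfl⟩ := n.eq_nat_or_neg
    · simpa only [diagonalEquiv_natCast] using hpos m
    · simpa only [diagonalEquiv_neg_natCast] using hneg m
  refine (diagonalEquiv.hasSum_iff.mpr hs).prod_fiberwise fun n ↦ ?_
  simpa only [Function.comp_def, diagonalEquiv_fst_sub_snd] using (hdiag n).mul_left (c n)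

end Summation

section QPochhammer

variable {a q : ℂ}

theorem summable_norm_neg_mul_pow (a : ℂ) (hq : ‖q‖ < 1) :
    Summable fun k : ℕ ↦ ‖-(a * q ^ k)‖ := by
  simp only [norm_neg, norm_mul]
  exact (summable_norm_geometric_of_norm_lt_one hq).mul_left _

theorem tendsto_qPoch (a : ℂ) (hq : ‖q‖ < 1) :
    Tendsto (qPoch a q) atTop (𝓝 (qPochInf a q)) := by
  have hmul := multipliable_one_add_of_summable (summable_norm_neg_mul_pow a hq)
  simp only [← sub_eq_add_neg] at hmul
  exact hmul.hasProd.tendsto_prod_nat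

theorem qPoch_zero (a q : ℂ) : qPoch a q 0 = 1 :=
  Finset.prod_range_zero _

theorem qPoch_succ (a q : ℂ) (n : ℕ) : qPoch a q (n + 1) = qPoch a q n * (1 - a * q ^ n) :=
  Finset.prod_range_succ _ _

theorem qPoch_ne_zero (ha : ∀ k : ℕ, a * q ^ k ≠ 1) (n : ℕ) : qPoch a q n ≠ 0 :=
  Finset.prod_ne_zero_iff.mpr fun k _ ↦ sub_ne_zero.mpr (ha k).symm

theorem qPochInf_ne_zero (hq : ‖q‖ < 1) (ha : ∀ k : ℕ, a * q ^ k ≠ 1) : qPochInf a q ≠ 0 := by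
  have hprod := tprod_one_add_ne_zero_of_summable (f := fun k : ℕ ↦ -(a * q ^ k))
    (fun k ↦ by simpa only [← sub_eq_add_neg] using sub_ne_zero.mpr (ha k).symm)
    (summable_norm_neg_mul_pow a hq)
  simpa only [qPochInf, sub_eq_add_neg] using hprod

theorem tendsto_inv_qPoch (hq : ‖q‖ < 1) (ha : ∀ k : ℕ, a * q ^ k ≠ 1) :
    Tendsto (fun n ↦ (qPoch a q n)⁻¹) atTop (𝓝 (qPochInf a q)⁻¹) :=
  (tendsto_qPoch a hq).inv₀ (qPochInf_ne_zero hq ha)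

theorem exists_norm_inv_qPoch_le (hq : ‖q‖ < 1) (ha : ∀ k : ℕ, a * q ^ k ≠ 1) :
    ∃ C, ∀ n, ‖(qPoch a q n)⁻¹‖ ≤ C := by
  simpa using (Metric.isBounded_range_of_tendsto _ (tendsto_inv_qPoch hq ha)).exists_norm_le

theorem self_mul_pow_ne_one (hq : ‖q‖ < 1) (k : ℕ) : q * q ^ k ≠ 1 := by
  intro h
  have hlt := pow_lt_one₀ (norm_nonneg q) hq k.succ_ne_zero
  rw [← norm_pow, pow_succ', h, norm_one] at hlt
  exact hlt.false

theorem qPoch_self_ne_zero (hq : ‖q‖ < 1) (n : ℕ) : qPoch q q n ≠ 0 :=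
  qPoch_ne_zero (self_mul_pow_ne_one hq) n

theorem qPochInf_self_ne_zero (hq : ‖q‖ < 1) : qPochInf q q ≠ 0 :=
  qPochInf_ne_zero hq (self_mul_pow_ne_one hq)

end QPochhammer

section Euler

variable {q : ℂ}

/-- The `i`-th term `q ^ (i choose 2) * z ^ i / (q;q)_i` of Euler's expansion of `(-z;q)_∞`. -/
noncomputable def eulerTerm (q z : ℂ) (i : ℕ) : ℂ := q ^ i.choose 2 * z ^ i / qPoch q q i

theorem eulerTerm_zero (q z : ℂ) : eulerTerm q z 0 = 1 := by
  simp [eulerTerm, qPoch_zero]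

theorem eulerTerm_mul (q z w : ℂ) (i : ℕ) : eulerTerm q (z * w) i = w ^ i * eulerTerm q z i := by
  rw [eulerTerm, eulerTerm, mul_pow]
  ring

theorem one_sub_pow_mul_eulerTerm_succ (hq : ‖q‖ < 1) (z : ℂ) (i : ℕ) :
    (1 - q ^ (i + 1)) * eulerTerm q z (i + 1) = z * q ^ i * eulerTerm q z i := by
  have hi := qPoch_self_ne_zero hq i
  have hfac := sub_ne_zero.mpr (self_mul_pow_ne_one hq i).symm
  rw [eulerTerm, eulerTerm, qPoch_succ, Nat.choose_succ_succ' i 1, Nat.choose_one_right]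
  field_simp
  ring

theorem summable_norm_eulerTerm (hq : ‖q‖ < 1) (z : ℂ) : Summable fun i ↦ ‖eulerTerm q z i‖ := by
  have hpow := tendsto_pow_atTop_nhds_zero_of_norm_lt_one hq
  have hratio : Tendsto (fun i ↦ ‖z * q ^ i / (1 - q ^ (i + 1))‖) atTop (𝓝 0) := by
    simpa using ((hpow.const_mul z).div (tendsto_const_nhds.sub
      ((tendsto_add_atTop_iff_nat 1).mpr hpow)) (by simp : (1 : ℂ) - 0 ≠ 0)).norm
  refine summable_of_ratio_norm_eventually_le (r := 1 / 2) (by norm_num) ?_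
  filter_upwards [hratio.eventually_le_const (by norm_num : (0 : ℝ) < 1 / 2)] with i hi
  have hfac : 1 - q ^ (i + 1) ≠ 0 :=
    sub_ne_zero.mpr (by simpa only [pow_succ'] using (self_mul_pow_ne_one hq i).symm)
  have hsucc : eulerTerm q z (i + 1) = z * q ^ i / (1 - q ^ (i + 1)) * eulerTerm q z i := by
    rw [div_mul_eq_mul_div, eq_div_iff hfac, mul_comm, one_sub_pow_mul_eulerTerm_succ hq]
  rw [norm_norm, norm_norm, hsucc, norm_mul]
  gcongr

theorem tsum_eulerTerm_eq_one_add_mul (hq : ‖q‖ < 1) (z : ℂ) :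
    ∑' i, eulerTerm q z i = (1 + z) * ∑' i, eulerTerm q (z * q) i := by
  have hz := (summable_norm_eulerTerm hq z).of_norm.hasSum
  have hzq := (summable_norm_eulerTerm hq (z * q)).of_norm.hasSum
  have hshift : HasSum (fun i ↦ eulerTerm q z i - eulerTerm q (z * q) i)
      (z * ∑' i, eulerTerm q (z * q) i) := by
    have hsucc : HasSum (fun i ↦ eulerTerm q z (i + 1) - eulerTerm q (z * q) (i + 1))
        (z * ∑' i, eulerTerm q (z * q) i) := by
      refine (hzq.mul_left z).congr_fun fun i ↦ ?_
      rw [eulerTerm_mul, eulerTerm_mul]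
      linear_combination one_sub_pow_mul_eulerTerm_succ hq z i
    simpa only [eulerTerm_zero, sub_self, zero_add] using
      HasSum.zero_add (f := fun i ↦ eulerTerm q z i - eulerTerm q (z * q) i) hsucc
  linear_combination (hz.sub hzq).unique hshift

theorem tsum_eulerTerm_eq_qPoch_mul (hq : ‖q‖ < 1) (z : ℂ) (n : ℕ) :
    ∑' i, eulerTerm q z i = qPoch (-z) q n * ∑' i, eulerTerm q (z * q ^ n) i := by
  induction n with
  | zero => simp [qPoch_zero]
  | succ n ih =>
    rw [ih, tsum_eulerTerm_eq_one_add_mul hq (z * q ^ n), qPoch_succ, pow_succ, ← mul_assoc z]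
    ring

theorem tendsto_tsum_eulerTerm_mul_pow (hq : ‖q‖ < 1) (z : ℂ) :
    Tendsto (fun n : ℕ ↦ ∑' i, eulerTerm q (z * q ^ n) i) atTop (𝓝 1) := by
  simp only [eulerTerm_mul]
  refine tendsto_tsum_of_dominated_of_tendsto_zero (b₀ := 0) (summable_norm_eulerTerm hq z)
    ?_ (fun i hi ↦ ?_) (fun n i ↦ ?_)
  · simp [eulerTerm_zero]
  · have hpow := (tendsto_pow_atTop_nhds_zero_of_norm_lt_one hq).pow i
    simpa [zero_pow hi] using hpow.mul_const (eulerTerm q z i)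
  · rw [norm_mul, norm_pow, norm_pow]
    exact mul_le_of_le_one_left (norm_nonneg _)
      (pow_le_one₀ (by positivity) (pow_le_one₀ (norm_nonneg q) hq.le))

theorem hasSum_eulerTerm (hq : ‖q‖ < 1) (z : ℂ) : HasSum (eulerTerm q z) (qPochInf (-z) q) := by
  have hlim := (tendsto_qPoch (-z) hq).mul (tendsto_tsum_eulerTerm_mul_pow hq z)
  simp only [← tsum_eulerTerm_eq_qPoch_mul hq, mul_one] at hlim
  rw [tendsto_nhds_unique hlim tendsto_const_nhds]
  exact (summable_norm_eulerTerm hq z).of_norm.hasSum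

end Euler

section Durfee

variable {q : ℂ}

/-- The weight `q ^ (i * j) / ((q;q)_i (q;q)_j)`, the generating function of the partitions with
an `i × j` Durfee rectangle. -/
noncomputable def durfeeWeight (q : ℂ) (i j : ℕ) : ℂ := q ^ (i * j) / (qPoch q q i * qPoch q q j)

theorem durfeeWeight_comm (q : ℂ) (i j : ℕ) : durfeeWeight q i j = durfeeWeight q j i := by
  rw [durfeeWeight, durfeeWeight, mul_comm i, mul_comm (qPoch q q i)]

theorem one_sub_pow_mul_durfeeWeight_succ (hq : ‖q‖ < 1) (i j : ℕ) :
    (1 - q ^ (i + 1)) * durfeeWeight q (i + 1) j = q ^ j * durfeeWeight q i j := by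
  have hi := qPoch_self_ne_zero hq i
  have hj := qPoch_self_ne_zero hq j
  have hfac := sub_ne_zero.mpr (self_mul_pow_ne_one hq i).symm
  rw [durfeeWeight, durfeeWeight, qPoch_succ]
  field_simp
  ring

theorem exists_norm_durfeeWeight_diagonal_le (hq : ‖q‖ < 1) :
    ∃ C, ∀ n k, ‖durfeeWeight q k (k + n)‖ ≤ C * ‖q‖ ^ k := by
  obtain ⟨C, hC⟩ := exists_norm_inv_qPoch_le hq (self_mul_pow_ne_one hq)
  have hC0 : 0 ≤ C := (norm_nonneg _).trans (hC 0)
  refine ⟨C * C, fun n k ↦ ?_⟩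
  have hpow : ‖q‖ ^ (k * (k + n)) ≤ ‖q‖ ^ k :=
    pow_le_pow_of_le_one (norm_nonneg q) hq.le (by nlinarith [Nat.le_mul_self k])
  rw [durfeeWeight, div_eq_mul_inv, mul_inv, norm_mul, norm_mul, norm_pow, mul_comm]
  gcongr
  exacts [hC k, hC (k + n)]

theorem summable_durfeeWeight_diagonal (hq : ‖q‖ < 1) (n : ℕ) :
    Summable fun k ↦ durfeeWeight q k (k + n) := by
  obtain ⟨C, hC⟩ := exists_norm_durfeeWeight_diagonal_le hq
  exact .of_norm_bounded ((summable_geometric_of_lt_one (norm_nonneg q) hq).mul_left C) (hC n)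

theorem tendsto_tsum_durfeeWeight_diagonal (hq : ‖q‖ < 1) :
    Tendsto (fun n ↦ ∑' k, durfeeWeight q k (k + n)) atTop (𝓝 (qPochInf q q)⁻¹) := by
  obtain ⟨C, hC⟩ := exists_norm_durfeeWeight_diagonal_le hq
  have hinv := tendsto_inv_qPoch hq (self_mul_pow_ne_one hq)
  refine tendsto_tsum_of_dominated_of_tendsto_zero (b₀ := 0)
    ((summable_geometric_of_lt_one (norm_nonneg q) hq).mul_left C) ?_ (fun k hk ↦ ?_) hC
  · simpa [durfeeWeight, qPoch_zero] using hinv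
  · have hpow : Tendsto (fun n ↦ q ^ (k * (k + n))) atTop (𝓝 0) :=
      (tendsto_pow_atTop_nhds_zero_of_norm_lt_one hq).comp <|
        tendsto_atTop_mono (fun n ↦ (Nat.le_add_left n k).trans
          (Nat.le_mul_of_pos_left _ (Nat.pos_of_ne_zero hk))) tendsto_id
    have hshift : Tendsto (fun n ↦ (qPoch q q (k + n))⁻¹) atTop (𝓝 (qPochInf q q)⁻¹) := by
      simpa only [add_comm] using (tendsto_add_atTop_iff_nat k).mpr hinv
    simpa [durfeeWeight, div_eq_mul_inv] using
      hpow.mul (hshift.mul_const (qPoch q q k)⁻¹)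

theorem hasSum_mul_one_sub_pow_mul_durfeeWeight (hq : ‖q‖ < 1) {c : ℕ → ℂ} {n : ℕ} {s : ℂ}
    (hs : HasSum (fun k ↦ c (k + 1) * q ^ (k + 1 + n) * durfeeWeight q k (k + (n + 1))) s) :
    HasSum (fun k ↦ c k * (1 - q ^ k) * durfeeWeight q k (k + n)) s := by
  have hshift : HasSum (fun k ↦ c (k + 1) * (1 - q ^ (k + 1)) *
      durfeeWeight q (k + 1) (k + 1 + n)) s := by
    refine hs.congr_fun fun k ↦ ?_
    rw [mul_assoc, one_sub_pow_mul_durfeeWeight_succ hq, ← mul_assoc, add_right_comm k 1 n,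
      add_assoc k n 1]
  simpa using
    HasSum.zero_add (f := fun k ↦ c k * (1 - q ^ k) * durfeeWeight q k (k + n)) hshift

theorem tsum_durfeeWeight_diagonal_succ (hq : ‖q‖ < 1) (n : ℕ) :
    ∑' k, durfeeWeight q k (k + (n + 1)) = ∑' k, durfeeWeight q k (k + n) := by
  have hA (m : ℕ) := (summable_durfeeWeight_diagonal hq m).hasSum
  obtain ⟨C, hC⟩ : ∃ C : ℕ → ℂ, ∀ m, HasSum (fun k ↦ q ^ k * durfeeWeight q k (k + m)) (C m) :=
    ⟨_, fun m ↦ (Summable.of_norm_bounded (hA m).summable.norm fun k ↦ by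
      rw [norm_mul, norm_pow]
      exact mul_le_of_le_one_left (norm_nonneg _) (pow_le_one₀ (norm_nonneg q) hq.le)).hasSum⟩
  have hfst : HasSum (fun k ↦ 1 * (1 - q ^ k) * durfeeWeight q k (k + n))
      (q ^ (n + 1) * C (n + 1)) := by
    refine hasSum_mul_one_sub_pow_mul_durfeeWeight hq (c := fun _ ↦ 1) ?_
    exact ((hC (n + 1)).mul_left (q ^ (n + 1))).congr_fun fun k ↦ by ring
  have hsnd : HasSum (fun k ↦ (1 - q ^ (k + n + 1)) * durfeeWeight q k (k + (n + 1))) (C n) := by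
    refine (hC n).congr_fun fun k ↦ ?_
    rw [durfeeWeight_comm, ← add_assoc, one_sub_pow_mul_durfeeWeight_succ hq, durfeeWeight_comm]
  have hA_left : ∑' k, durfeeWeight q k (k + n) = C n + q ^ (n + 1) * C (n + 1) :=
    (hA n).unique (((hC n).add hfst).congr_fun fun k ↦ by ring)
  have hA_right : ∑' k, durfeeWeight q k (k + (n + 1)) = C n + q ^ (n + 1) * C (n + 1) :=
    (hA (n + 1)).unique
      ((hsnd.add ((hC (n + 1)).mul_left (q ^ (n + 1)))).congr_fun fun k ↦ by ring)
  rw [hA_left, hA_right]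

theorem hasSum_durfeeWeight_diagonal (hq : ‖q‖ < 1) (n : ℕ) :
    HasSum (fun k ↦ durfeeWeight q k (k + n)) (qPochInf q q)⁻¹ := by
  have hconst (m : ℕ) : ∑' k, durfeeWeight q k (k + (m + n)) = ∑' k, durfeeWeight q k (k + n) := by
    induction m with
    | zero => rw [zero_add]
    | succ m ih => rw [add_right_comm, tsum_durfeeWeight_diagonal_succ hq, ih]
  have hlim := (tendsto_add_atTop_iff_nat n).mpr (tendsto_tsum_durfeeWeight_diagonal hq)
  simp only [hconst] at hlim
  rw [tendsto_nhds_unique hlim tendsto_const_nhds]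
  exact (summable_durfeeWeight_diagonal hq n).hasSum

theorem hasSum_durfeeWeight_diagonal_div_pow (hq0 : q ≠ 0) (hq : ‖q‖ < 1) (n : ℕ) :
    HasSum (fun k ↦ durfeeWeight q k (k + n) / q ^ k) ((1 + q ^ n) / qPochInf q q) := by
  have hdiff : HasSum (fun k ↦ (q ^ k)⁻¹ * (1 - q ^ k) * durfeeWeight q k (k + n))
      (q ^ n * (qPochInf q q)⁻¹) := by
    refine hasSum_mul_one_sub_pow_mul_durfeeWeight hq (c := fun k ↦ (q ^ k)⁻¹) ?_
    refine ((hasSum_durfeeWeight_diagonal hq (n + 1)).mul_left (q ^ n)).congr_fun fun k ↦ ?_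
    rw [pow_add q (k + 1) n, inv_mul_cancel_left₀ (pow_ne_zero _ hq0)]
  convert (hasSum_durfeeWeight_diagonal hq n).add hdiff using 1
  · ext k
    field_simp
    ring
  · ring

end Durfee

section TripleProduct

variable {q z : ℂ}

/-- The triangular number `n * (n - 1) / 2` of an integer `n`: the exponent of the theta series
and of `qTauZ`. It is a natural number because `n * (n - 1)` is even and nonnegative. -/
def intTriangle (n : ℤ) : ℕ := (n * (n - 1) / 2).toNat

theorem two_mul_intTriangle (n : ℤ) : 2 * (intTriangle n : ℤ) = n * (n - 1) := by
  have hnonneg : 0 ≤ n * (n - 1) := by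
    rcases le_or_gt n 0 with hn | hn
    · exact mul_nonneg_of_nonpos_of_nonpos hn (by omega)
    · exact mul_nonneg hn.le (by omega)
  have heven := Int.two_mul_ediv_two_of_even n.even_mul_pred_self
  rw [intTriangle]
  omega

theorem intTriangle_neg (n : ℤ) : (intTriangle (-n) : ℤ) = intTriangle n + n := by
  linarith [two_mul_intTriangle n, two_mul_intTriangle (-n)]

theorem intTriangle_natCast (n : ℕ) : intTriangle n = n.choose 2 := by
  have h : (intTriangle n : ℚ) = n.choose 2 := by
    rw [Nat.cast_choose_two, eq_div_iff two_ne_zero, mul_comm]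
    exact_mod_cast two_mul_intTriangle n
  exact_mod_cast h

theorem intTriangle_sub_add_mul (i j : ℕ) :
    intTriangle ((i : ℤ) - j) + i * j = i.choose 2 + j.choose 2 + j := by
  rw [← intTriangle_natCast, ← intTriangle_natCast]
  zify
  linarith [two_mul_intTriangle ((i : ℤ) - j), two_mul_intTriangle i, two_mul_intTriangle j]

theorem eulerTerm_mul_eulerTerm_div (q : ℂ) (hz : z ≠ 0) (i j : ℕ) :
    eulerTerm q z i * eulerTerm q (q / z) j =
      q ^ intTriangle ((i : ℤ) - j) * z ^ ((i : ℤ) - j) * durfeeWeight q i j := by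
  have hpow : q ^ i.choose 2 * q ^ j.choose 2 * q ^ j =
      q ^ intTriangle ((i : ℤ) - j) * q ^ (i * j) := by
    simp only [← pow_add, intTriangle_sub_add_mul]
  rw [eulerTerm, eulerTerm, durfeeWeight, div_pow, zpow_sub₀ hz, zpow_natCast, zpow_natCast]
  linear_combination (z ^ i / z ^ j / (qPoch q q i * qPoch q q j)) * hpow

theorem jacobi_triple_product (hq : ‖q‖ < 1) (hz : z ≠ 0) :
    HasSum (fun n : ℤ ↦ q ^ intTriangle n * z ^ n)
      (qPochInf (-z) q * qPochInf (-(q / z)) q * qPochInf q q) := by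
  have hprod := (hasSum_eulerTerm hq z).mul (hasSum_eulerTerm hq (q / z))
    (summable_mul_of_summable_norm (summable_norm_eulerTerm hq z)
      (summable_norm_eulerTerm hq (q / z)))
  simp only [eulerTerm_mul_eulerTerm_div q hz] at hprod
  have hdiag := hasSum_int_of_hasSum_diagonals (c := fun n ↦ q ^ intTriangle n * z ^ n)
    (f := fun x ↦ durfeeWeight q x.1 x.2) (g := fun _ ↦ (qPochInf q q)⁻¹) hprod
    (fun m ↦ by simpa only [durfeeWeight_comm] using hasSum_durfeeWeight_diagonal hq m)
    (hasSum_durfeeWeight_diagonal hq)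
  simpa only [inv_mul_cancel_right₀ (qPochInf_self_ne_zero hq)] using
    hdiag.mul_right (qPochInf q q)

end TripleProduct

section DoubleSeries

variable {q : ℂ}

theorem hasSum_int_of_hasSum_durfeeWeight_div_pow (hq0 : q ≠ 0) (hq : ‖q‖ < 1) {c : ℤ → ℂ} {s : ℂ}
    (hs : HasSum (fun x : ℕ × ℕ ↦ c ((x.1 : ℤ) - x.2) * (durfeeWeight q x.1 x.2 / q ^ x.2)) s) :
    HasSum (fun n ↦ c n * ((1 + q ^ n) / qPochInf q q)) s := by
  refine hasSum_int_of_hasSum_diagonals hs (fun m ↦ ?_) (fun m ↦ ?_)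
  · simpa only [durfeeWeight_comm, zpow_natCast] using
      hasSum_durfeeWeight_diagonal_div_pow hq0 hq m
  · convert (hasSum_durfeeWeight_diagonal_div_pow hq0 hq m).mul_left (q ^ m)⁻¹ using 1
    · ext k
      rw [pow_add]
      field_simp
    · rw [zpow_neg, zpow_natCast]
      field_simp
      ring

theorem qTauP_neg_mul_qTauZ (hq0 : q ≠ 0) (p : ℕ) (n : ℤ) :
    qTauP q p (-n) * qTauZ q n = (q ^ (p + 1)) ^ intTriangle n * (q ^ p) ^ n := by
  have hsign : (-1 : ℂ) ^ (-n) * (-1) ^ n = 1 := by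
    rw [← zpow_add₀ (by norm_num), neg_add_cancel, zpow_zero]
  have hneg : (q ^ p) ^ intTriangle (-n) = (q ^ p) ^ intTriangle n * (q ^ p) ^ n := by
    rw [← zpow_natCast, intTriangle_neg, zpow_add₀ (pow_ne_zero p hq0), zpow_natCast]
  have hP : qTauP q p (-n) = (-1) ^ (-n) * (q ^ p) ^ intTriangle (-n) := by
    rw [qTauP, pow_mul, intTriangle]
  have hZ : qTauZ q n = (-1) ^ n * q ^ intTriangle n := rfl
  rw [hP, hZ, hneg, pow_succ q p, mul_pow]
  linear_combination ((q ^ p) ^ intTriangle n * (q ^ p) ^ n * q ^ intTriangle n) * hsign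

theorem qTauP_mul_qTauZ_mul_div_eq (hq0 : q ≠ 0) (p : ℕ) (y : ℂ) (i j : ℕ) :
    qTauP q p ((j : ℤ) - i) * qTauZ q ((i : ℤ) - j) * y ^ ((i : ℤ) - j) *
        q ^ (((i : ℤ) - 1) * j) / (qPoch q q i * qPoch q q j) =
      (q ^ (p + 1)) ^ intTriangle ((i : ℤ) - j) * (q ^ p * y) ^ ((i : ℤ) - j) *
        (durfeeWeight q i j / q ^ j) := by
  have hpow : q ^ (((i : ℤ) - 1) * j) = q ^ (i * j) / q ^ j := by
    rw [sub_mul, one_mul, zpow_sub₀ hq0, ← Nat.cast_mul, zpow_natCast, zpow_natCast]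
  rw [← neg_sub (i : ℤ) j, qTauP_neg_mul_qTauZ hq0, hpow, mul_zpow, durfeeWeight]
  ring

theorem hasSum_theta_mul_one_add_zpow (hq0 : q ≠ 0) (hq : ‖q‖ < 1) (p : ℕ) {y : ℂ} (hy : y ≠ 0) :
    HasSum (fun n : ℤ ↦ (q ^ (p + 1)) ^ intTriangle n * (q ^ p * y) ^ n * (1 + q ^ n))
      (qPochInf (-1 / y) (q ^ (p + 1)) * qPochInf (-q ^ (p + 1) * y) (q ^ (p + 1)) *
          qPochInf (q ^ (p + 1)) (q ^ (p + 1)) +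
        qPochInf (-q / y) (q ^ (p + 1)) * qPochInf (-q ^ p * y) (q ^ (p + 1)) *
          qPochInf (q ^ (p + 1)) (q ^ (p + 1))) := by
  have hQ : ‖q ^ (p + 1)‖ < 1 := by
    rw [norm_pow]
    exact pow_lt_one₀ (norm_nonneg q) hq p.succ_ne_zero
  have hquot : q ^ (p + 1) / (q ^ (p + 1) * y) = 1 / y := by field_simp
  have hquot' : q ^ (p + 1) / (q ^ p * y) = q / y := by
    rw [pow_succ, mul_div_mul_left _ _ (pow_ne_zero p hq0)]
  have hjtp := jacobi_triple_product hQ (mul_ne_zero (pow_ne_zero (p + 1) hq0) hy)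
  have hjtp' := jacobi_triple_product hQ (mul_ne_zero (pow_ne_zero p hq0) hy)
  rw [hquot] at hjtp
  rw [hquot'] at hjtp'
  convert hjtp.add hjtp' using 1
  · ext n
    rw [pow_succ q p, mul_right_comm (q ^ p) q y, mul_zpow (q ^ p * y) q n]
    ring
  · simp only [neg_mul, neg_div]
    ring

end DoubleSeries

theorem stmt12 (q : ℂ) (hq0 : 0 < ‖q‖) (hq1 : ‖q‖ < 1)
    (p : ℕ) (hp : 0 < p) (y : ℂ) (hy : y ≠ 0)
    (h1 : Summable (fun ij : ℕ × ℕ => ‖qTauP q p ((ij.2 : ℤ) - (ij.1 : ℤ)) *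
      qTauZ q ((ij.1 : ℤ) - (ij.2 : ℤ)) * y ^ ((ij.1 : ℤ) - (ij.2 : ℤ)) *
      q ^ (((ij.1 : ℤ) - 1) * (ij.2 : ℤ)) / (qPoch q q ij.1 * qPoch q q ij.2)‖)) :
    ∑' ij : ℕ × ℕ, qTauP q p ((ij.2 : ℤ) - (ij.1 : ℤ)) *
      qTauZ q ((ij.1 : ℤ) - (ij.2 : ℤ)) * y ^ ((ij.1 : ℤ) - (ij.2 : ℤ)) *
      q ^ (((ij.1 : ℤ) - 1) * (ij.2 : ℤ)) / (qPoch q q ij.1 * qPoch q q ij.2)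
    = (qPochInf (-1 / y) (q ^ (p + 1)) * qPochInf (-q ^ (p + 1) * y) (q ^ (p + 1)) *
        qPochInf (q ^ (p + 1)) (q ^ (p + 1))
      + qPochInf (-q / y) (q ^ (p + 1)) * qPochInf (-q ^ p * y) (q ^ (p + 1)) *
        qPochInf (q ^ (p + 1)) (q ^ (p + 1))) / qPochInf q q := by
  have hq : q ≠ 0 := norm_pos_iff.mp hq0
  have hdouble := h1.of_norm.hasSum
  simp only [qTauP_mul_qTauZ_mul_div_eq hq] at hdouble ⊢
  have hdiag := hasSum_int_of_hasSum_durfeeWeight_div_pow hq hq1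
    (c := fun n ↦ (q ^ (p + 1)) ^ intTriangle n * (q ^ p * y) ^ n) hdouble
  have htheta := (hasSum_theta_mul_one_add_zpow hq hq1 p hy).div_const (qPochInf q q)
  simp only [mul_div_assoc] at htheta
  exact hdiag.unique htheta
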